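/- Assume the WENO weight and reconstruction setup with f of class C^∞ on a neighborhood of z having a critical point of exact order k at z with 0 ≤ k ≤ R−3, assume that either R ≥ 5, or k is even, or c_j + c_{j+1} ≠ 0 for every 0 ≤ j ≤ R−2, and assume 2s ≥ r+1. Then the WENO reconstruction attains the optimal order R: there exist C > 0 and h₀ > 0 such that for every ε > 0 and every 0 < h < h₀, |q_{R,h}(x*_h) − f(z + c*·h)| ≤ C·h^R. -/

import Mathlib

/-- Simple smoothness indicator `I_{R,i,h}` on the nonuniform stencil `x_{i,h} = z + cᵢ h`,
with `r = ⌊(R-1)/2⌋`. -/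
noncomputable def wenoI (R : ℕ) (c : ℕ → ℝ) (z : ℝ) (f : ℝ → ℝ) (i : ℕ) (h : ℝ) : ℝ :=
  ∑ j ∈ Finset.Ico i (i + (R - 1) / 2),
    ((f (z + c (j + 1) * h) - f (z + c j * h)) / (c (j + 1) - c j)) ^ 2

/-- Squared undivided difference `d_{R,h}` of `f` on the full stencil. -/
noncomputable def wenoD (R : ℕ) (c : ℕ → ℝ) (z : ℝ) (f : ℝ → ℝ) (h : ℝ) : ℝ :=
  (((R - 1).factorial : ℝ) *
      ∑ i ∈ Finset.range R,
        f (z + c i * h) / ∏ j ∈ (Finset.range R).erase i, (c i - c j)) ^ 2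

/-- Unnormalized WENO weight `α_{R,i,h}`, with `r' = ⌈(R-1)/2⌉ = R/2` (ℕ-division). -/
noncomputable def wenoAlpha (R : ℕ) (c : ℕ → ℝ) (z : ℝ) (f : ℝ → ℝ) (s : ℕ) (ε : ℝ)
    (i : ℕ) (h : ℝ) : ℝ :=
  (1 / (((R / 2 : ℕ) : ℝ) + 1)) *
    (1 + (wenoD R c z f h) ^ s / ((wenoI R c z f i h) ^ s + ε))

/-- Normalized WENO weight `ω_{R,i,h}`. -/
noncomputable def wenoOmega (R : ℕ) (c : ℕ → ℝ) (z : ℝ) (f : ℝ → ℝ) (s : ℕ) (ε : ℝ)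
    (i : ℕ) (h : ℝ) : ℝ :=
  wenoAlpha R c z f s ε i h / ∑ j ∈ Finset.range (R / 2 + 1), wenoAlpha R c z f s ε j h

/-- Global average weight `ω_{R,h}`. -/
noncomputable def wenoOmegaG (R : ℕ) (c : ℕ → ℝ) (z : ℝ) (f : ℝ → ℝ) (s : ℕ) (ε : ℝ)
    (h : ℝ) : ℝ :=
  1 / (1 + (wenoD R c z f h) ^ s *
        ∑ i ∈ Finset.range (R / 2 + 1), 1 / ((wenoI R c z f i h) ^ s + ε))


/-- Lagrange reconstruction value `p_{R,i,h}(x*_h)` of the `i`-th substencil, evaluated at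
`x*_h = z + c* h`, with `r = ⌊(R-1)/2⌋`. -/
noncomputable def wenoP (R : ℕ) (c : ℕ → ℝ) (z cstar : ℝ) (f : ℝ → ℝ) (i : ℕ) (h : ℝ) : ℝ :=
  ∑ j ∈ Finset.Icc i (i + (R - 1) / 2),
    (∏ l ∈ (Finset.Icc i (i + (R - 1) / 2)).erase j, (cstar - c l) / (c j - c l)) *
      f (z + c j * h)

/-- Lagrange reconstruction value `p_{R,h}(x*_h)` of the full stencil. -/
noncomputable def wenoPfull (R : ℕ) (c : ℕ → ℝ) (z cstar : ℝ) (f : ℝ → ℝ) (h : ℝ) : ℝ :=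
  ∑ j ∈ Finset.range R,
    (∏ l ∈ (Finset.range R).erase j, (cstar - c l) / (c j - c l)) * f (z + c j * h)

/-- The WENO reconstruction `q_{R,h}(x*_h)`. -/
noncomputable def wenoQ (R : ℕ) (c : ℕ → ℝ) (z cstar : ℝ) (f : ℝ → ℝ) (s : ℕ) (ε h : ℝ) : ℝ :=
  wenoOmegaG R c z f s ε h * wenoPfull R c z cstar f h +
    (1 - wenoOmegaG R c z f s ε h) *
      ∑ i ∈ Finset.range (R / 2 + 1), wenoOmega R c z f s ε i h * wenoP R c z cstar f i h

/-!
Expanding at `z`, a linear combination `∑ wⱼ f (z + vⱼ h)` equals `∑ₘ (∑ wⱼ vⱼᵐ) f⁽ᵐ⁾(z) hᵐ / m!` up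
to a small error, so every estimate is a statement about moments. The moments of the Lagrange
weights give errors `O(h^R)` on the full stencil and `O(h^(r+1))` on the substencils, those of
divided differences give `d = O(h^(2(R-1)))`, and an increment between nodes with
`a^(k+1) ≠ b^(k+1)` is of exact order `h^(k+1)`, whence `1 / Iᵢ = O(h^(-2(k+1)))`.

The dependence on `ε` disappears through `1 - ω ≤ ∑ (d / Iᵢ)^s`, which is at most
`O(h^(2s(R-2-k)))`. The substencil error is therefore damped by a further factor `O(h^(r+1))`, and
`2(r+1) ≥ R`.
-/

open Filter Topology Asymptotics Finset Polynomial
open scoped Nat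

section Taylor

variable {E : Type*} [NormedAddCommGroup E] [NormedSpace ℝ E] {f : ℝ → E} {z : ℝ} {n : ℕ}

theorem isBigO_pow_pow_nhds_zero_of_le {𝕜 : Type*} [NormedField 𝕜] {m n : ℕ} (hmn : m ≤ n) :
    (fun x : 𝕜 => x ^ n) =O[𝓝 0] fun x => x ^ m := by
  rcases hmn.eq_or_lt with rfl | hlt
  · exact isBigO_refl _ _
  · exact (isLittleO_pow_pow hlt).isBigO

theorem taylor_isLittleO_of_contDiffAt (hf : ContDiffAt ℝ n f z) :
    (fun t => f (z + t) - ∑ m ∈ range (n + 1), (t ^ m / m !) • iteratedDeriv m f z)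
      =o[𝓝 0] fun t => t ^ n := by
  obtain ⟨u, hu, hfu⟩ := hf.contDiffOn le_rfl (by simp)
  obtain ⟨δ, hδ, hball⟩ := Metric.mem_nhds_iff.1 hu
  have hz : z ∈ Metric.ball z δ := Metric.mem_ball_self hδ
  have htaylor := taylor_isLittleO (convex_ball z δ) hz (hfu.mono hball)
  rw [Metric.isOpen_ball.nhdsWithin_eq hz] at htaylor
  have hshift : Tendsto (fun t : ℝ => z + t) (𝓝 0) (𝓝 z) :=
    (continuous_const_add z).tendsto' 0 z (add_zero z)
  refine (htaylor.comp_tendsto hshift).congr (fun t => ?_) (fun t => ?_)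
  · simp only [Function.comp_apply, taylor_within_apply, add_sub_cancel_left,
      iteratedDerivWithin_of_isOpen Metric.isOpen_ball hz, div_eq_inv_mul]
  · simp only [Function.comp_apply, add_sub_cancel_left]

theorem taylor_isLittleO_comp_mul (hf : ContDiffAt ℝ n f z) (a : ℝ) :
    (fun h => f (z + a * h) - ∑ m ∈ range (n + 1), a ^ m • (h ^ m / m !) • iteratedDeriv m f z)
      =o[𝓝 0] fun h => h ^ n := by
  have hscale : Tendsto (fun h : ℝ => a * h) (𝓝 0) (𝓝 0) :=
    (continuous_const_mul a).tendsto' 0 0 (mul_zero a)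
  have hpow : (fun h => (a * h) ^ n) =O[𝓝 0] fun h => h ^ n := by
    simpa only [mul_pow] using (isBigO_refl (fun h : ℝ => h ^ n) _).const_mul_left (a ^ n)
  refine (((taylor_isLittleO_of_contDiffAt hf).comp_tendsto hscale).congr_left
    fun h => ?_).trans_isBigO hpow
  simp only [Function.comp_apply, mul_pow, smul_smul, mul_div_assoc]

theorem taylor_isBigO_comp_mul (hf : ContDiffAt ℝ n f z) (a : ℝ) :
    (fun h => f (z + a * h) - ∑ m ∈ range n, a ^ m • (h ^ m / m !) • iteratedDeriv m f z)
      =O[𝓝 0] fun h => h ^ n := by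
  have hlast : (fun h : ℝ => a ^ n • (h ^ n / n !) • iteratedDeriv n f z)
      =O[𝓝 0] fun h => h ^ n := by
    refine ((isBigO_refl (fun h : ℝ => h ^ n) _).smul (isBigO_const_const
      ((a ^ n / n !) • iteratedDeriv n f z) (one_ne_zero (α := ℝ)) (𝓝 0))).congr
      (fun h => ?_) (fun h => ?_)
    · module
    · rw [smul_eq_mul, mul_one]
  refine ((taylor_isLittleO_comp_mul hf a).isBigO.add hlast).congr_left fun h => ?_
  rw [sum_range_succ]
  abel

theorem sum_smul_sub_moments_isBigO {ι : Type*} (hf : ContDiffAt ℝ n f z) (s : Finset ι)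
    (w v : ι → ℝ) :
    (fun h => ∑ i ∈ s, w i • f (z + v i * h) -
        ∑ m ∈ range n, (∑ i ∈ s, w i * v i ^ m) • (h ^ m / m !) • iteratedDeriv m f z)
      =O[𝓝 0] fun h => h ^ n := by
  refine (IsBigO.fun_sum fun i (_ : i ∈ s) =>
    (taylor_isBigO_comp_mul hf (v i)).const_smul_left (w i)).congr_left fun h => ?_
  simp only [Pi.smul_apply, smul_sub, sum_sub_distrib, smul_sum, sum_smul, mul_smul]
  rw [sum_comm]

theorem pow_isBigO_pow_smul {l : Filter ℝ} {L : E} (hL : L ≠ 0) (n : ℕ) :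
    (fun h => h ^ n) =O[l] fun h => h ^ n • L := by
  simpa only [smul_eq_mul, mul_one] using
    (isBigO_refl (fun h : ℝ => h ^ n) l).smul (isBigO_const_const (1 : ℝ) hL l)

theorem isEquivalent_sub_of_iteratedDeriv_eq_zero (hf : ContDiffAt ℝ n f z)
    (hcrit : ∀ m, 1 ≤ m → m < n → iteratedDeriv m f z = 0) (hn : iteratedDeriv n f z ≠ 0)
    {a b : ℝ} (hab : a ^ n ≠ b ^ n) :
    (fun h => f (z + b * h) - f (z + a * h))
      ~[𝓝 0] fun h => h ^ n • ((b ^ n - a ^ n) / n !) • iteratedDeriv n f z := by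
  set L := ((b ^ n - a ^ n) / n !) • iteratedDeriv n f z with hL
  have hL0 : L ≠ 0 := smul_ne_zero (div_ne_zero (sub_ne_zero.2 hab.symm) (by positivity)) hn
  refine (((taylor_isLittleO_comp_mul hf b).sub
    (taylor_isLittleO_comp_mul hf a)).trans_isBigO
    (pow_isBigO_pow_smul hL0 n)).congr_left fun h => ?_
  have hterms : ∑ m ∈ range (n + 1), b ^ m • (h ^ m / m !) • iteratedDeriv m f z -
      ∑ m ∈ range (n + 1), a ^ m • (h ^ m / m !) • iteratedDeriv m f z = h ^ n • L := by
    rw [← sum_sub_distrib, sum_range_succ, sum_eq_zero, zero_add, hL]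
    · module
    · intro m hm
      rcases m.eq_zero_or_pos with rfl | hpos
      · simp
      · simp [hcrit m hpos (mem_range.1 hm)]
  rw [Pi.sub_apply, ← hterms]
  abel

theorem pow_isBigO_sub_of_iteratedDeriv_eq_zero (hf : ContDiffAt ℝ n f z)
    (hcrit : ∀ m, 1 ≤ m → m < n → iteratedDeriv m f z = 0) (hn : iteratedDeriv n f z ≠ 0)
    {a b : ℝ} (hab : a ^ n ≠ b ^ n) :
    (fun h => h ^ n) =O[𝓝 0] fun h => f (z + b * h) - f (z + a * h) :=
  (pow_isBigO_pow_smul (smul_ne_zero (div_ne_zero (sub_ne_zero.2 hab.symm) (by positivity)) hn)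
    n).trans (isEquivalent_sub_of_iteratedDeriv_eq_zero hf hcrit hn hab).isBigO_symm

end Taylor

section Lagrange

variable {ι F : Type*} [DecidableEq ι] [Field F] {s : Finset ι} {v : ι → F}

theorem eval_lagrange_basis (s : Finset ι) (v : ι → F) (i : ι) (x : F) :
    (Lagrange.basis s v i).eval x = ∏ j ∈ s.erase i, (x - v j) / (v i - v j) := by
  simp [Lagrange.basis, Lagrange.basisDivisor, eval_prod, div_eq_inv_mul]

theorem sum_eval_lagrange_basis_mul_pow (hv : Set.InjOn v s) (x : F) {m : ℕ} (hm : m < #s) :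
    ∑ i ∈ s, (Lagrange.basis s v i).eval x * v i ^ m = x ^ m := by
  have hdeg : (X ^ m : F[X]).degree < #s := by simpa using hm
  simpa [Lagrange.interpolate_apply, eval_finsetSum, mul_comm] using
    (congrArg (eval x) (Lagrange.eq_interpolate hv hdeg)).symm

theorem sum_pow_div_prod_sub_eq_zero (hv : Set.InjOn v s) {m : ℕ} (hm : m < #s - 1) :
    ∑ i ∈ s, v i ^ m / ∏ j ∈ s.erase i, (v i - v j) = 0 := by
  have hdeg : (X ^ m : F[X]).degree < #s := by
    simpa using hm.trans_le (Nat.sub_le _ _)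
  simpa [coeff_X_pow, hm.ne'] using (Lagrange.coeff_eq_sum hv hdeg).symm

variable {E : Type*} [NormedAddCommGroup E] [NormedSpace ℝ E] {f : ℝ → E} {z : ℝ} {v : ι → ℝ}

theorem lagrange_interpolation_sub_isBigO (hv : Set.InjOn v s) (hf : ContDiffAt ℝ (#s) f z)
    (a : ℝ) :
    (fun h => ∑ i ∈ s, (Lagrange.basis s v i).eval a • f (z + v i * h) - f (z + a * h))
      =O[𝓝 0] fun h => h ^ #s := by
  refine ((sum_smul_sub_moments_isBigO hf s (fun i => (Lagrange.basis s v i).eval a) v).sub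
    (taylor_isBigO_comp_mul hf a)).congr_left fun h => ?_
  have hmoments : ∑ m ∈ range #s, (∑ i ∈ s, (Lagrange.basis s v i).eval a * v i ^ m) •
      (h ^ m / m !) • iteratedDeriv m f z =
      ∑ m ∈ range #s, a ^ m • (h ^ m / m !) • iteratedDeriv m f z :=
    sum_congr rfl fun m hm => by rw [sum_eval_lagrange_basis_mul_pow hv a (mem_range.1 hm)]
  rw [hmoments, sub_sub_sub_cancel_right]

theorem divided_difference_isBigO (hv : Set.InjOn v s)
    (hf : ContDiffAt ℝ (#s - 1 : ℕ) f z) :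
    (fun h => ∑ i ∈ s, (∏ j ∈ s.erase i, (v i - v j))⁻¹ • f (z + v i * h))
      =O[𝓝 0] fun h => h ^ (#s - 1) := by
  refine (sum_smul_sub_moments_isBigO hf s
    (fun i => (∏ j ∈ s.erase i, (v i - v j))⁻¹) v).congr_left fun h => ?_
  rw [sum_eq_zero (s := range _), sub_zero]
  intro m hm
  rw [← zero_smul ℝ ((h ^ m / m !) • iteratedDeriv m f z),
    ← sum_pow_div_prod_sub_eq_zero hv (mem_range.1 hm)]
  simp only [div_eq_inv_mul]

end Lagrange

theorem abs_sum_mul_sub_le_sum_abs_sub {ι : Type*} {s : Finset ι} {w : ι → ℝ}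
    (hw : ∀ i ∈ s, 0 ≤ w i) (hsum : ∑ i ∈ s, w i = 1) (p : ι → ℝ) (y : ℝ) :
    |∑ i ∈ s, w i * p i - y| ≤ ∑ i ∈ s, |p i - y| := by
  have hw1 : ∀ i ∈ s, w i ≤ 1 := fun i hi => hsum ▸ single_le_sum hw hi
  calc |∑ i ∈ s, w i * p i - y| = |∑ i ∈ s, w i * (p i - y)| := by
        simp only [mul_sub, sum_sub_distrib, ← sum_mul, hsum, one_mul]
    _ ≤ ∑ i ∈ s, |w i * (p i - y)| := abs_sum_le_sum_abs _ _
    _ ≤ ∑ i ∈ s, |p i - y| := sum_le_sum fun i hi => by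
        rw [abs_mul, abs_of_nonneg (hw i hi)]
        exact mul_le_of_le_one_left (abs_nonneg _) (hw1 i hi)

section Weno

variable {R : ℕ} {c : ℕ → ℝ} {z cstar : ℝ} {f : ℝ → ℝ} {s i k : ℕ} {ε h : ℝ}

theorem wenoI_nonneg : 0 ≤ wenoI R c z f i h :=
  sum_nonneg fun _ _ => sq_nonneg _

theorem wenoD_nonneg : 0 ≤ wenoD R c z f h :=
  sq_nonneg _

theorem wenoAlpha_pos (hε : 0 ≤ ε) : 0 < wenoAlpha R c z f s ε i h := by
  have hI := pow_nonneg (wenoI_nonneg (R := R) (c := c) (z := z) (f := f) (i := i) (h := h)) s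
  have hD := pow_nonneg (wenoD_nonneg (R := R) (c := c) (z := z) (f := f) (h := h)) s
  unfold wenoAlpha
  positivity

theorem sum_wenoAlpha_pos (hε : 0 ≤ ε) :
    0 < ∑ j ∈ range (R / 2 + 1), wenoAlpha R c z f s ε j h :=
  sum_pos (fun _ _ => wenoAlpha_pos hε) nonempty_range_add_one

theorem wenoOmega_nonneg (hε : 0 ≤ ε) : 0 ≤ wenoOmega R c z f s ε i h :=
  div_nonneg (wenoAlpha_pos hε).le (sum_wenoAlpha_pos hε).le

theorem sum_wenoOmega (hε : 0 ≤ ε) : ∑ j ∈ range (R / 2 + 1), wenoOmega R c z f s ε j h = 1 := by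
  simp only [wenoOmega]
  rw [← sum_div, div_self (sum_wenoAlpha_pos hε).ne']

theorem wenoOmegaG_denom_sub_one_mem_Icc (hε : 0 ≤ ε)
    (hI : ∀ i ∈ range (R / 2 + 1), 0 < wenoI R c z f i h) :
    wenoD R c z f h ^ s * ∑ i ∈ range (R / 2 + 1), 1 / (wenoI R c z f i h ^ s + ε) ∈
      Set.Icc 0 (∑ i ∈ range (R / 2 + 1), (wenoD R c z f h / wenoI R c z f i h) ^ s) := by
  have hD : 0 ≤ wenoD R c z f h ^ s := pow_nonneg wenoD_nonneg s
  have hIs : ∀ i ∈ range (R / 2 + 1), 0 < wenoI R c z f i h ^ s := fun i hi => pow_pos (hI i hi) s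
  rw [mul_sum]
  refine ⟨sum_nonneg fun i hi => ?_, sum_le_sum fun i hi => ?_⟩
  · have := hIs i hi
    positivity
  · rw [mul_one_div, div_pow]
    exact div_le_div_of_nonneg_left hD (hIs i hi) (le_add_of_nonneg_right hε)

theorem wenoOmegaG_mem_Icc (hε : 0 ≤ ε) (hI : ∀ i ∈ range (R / 2 + 1), 0 < wenoI R c z f i h) :
    wenoOmegaG R c z f s ε h ∈ Set.Icc 0 1 := by
  obtain ⟨hX, -⟩ := wenoOmegaG_denom_sub_one_mem_Icc (s := s) hε hI
  exact ⟨one_div_nonneg.2 (by linarith), div_le_one_of_le₀ (by linarith) (by linarith)⟩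

theorem one_sub_wenoOmegaG_le (hε : 0 ≤ ε)
    (hI : ∀ i ∈ range (R / 2 + 1), 0 < wenoI R c z f i h) :
    1 - wenoOmegaG R c z f s ε h ≤
      ∑ i ∈ range (R / 2 + 1), (wenoD R c z f h / wenoI R c z f i h) ^ s := by
  obtain ⟨hX, hXle⟩ := wenoOmegaG_denom_sub_one_mem_Icc (s := s) hε hI
  refine le_trans ?_ hXle
  rw [wenoOmegaG, one_sub_div (by linarith), add_sub_cancel_left]
  exact div_le_self hX (by linarith)

theorem abs_wenoQ_sub_le (hε : 0 ≤ ε) (hI : ∀ i ∈ range (R / 2 + 1), 0 < wenoI R c z f i h)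
    (y : ℝ) :
    |wenoQ R c z cstar f s ε h - y| ≤ |wenoPfull R c z cstar f h - y| +
      (∑ i ∈ range (R / 2 + 1), (wenoD R c z f h / wenoI R c z f i h) ^ s) *
        ∑ i ∈ range (R / 2 + 1), |wenoP R c z cstar f i h - y| := by
  set ω := wenoOmegaG R c z f s ε h with hω
  set q := ∑ i ∈ range (R / 2 + 1), wenoOmega R c z f s ε i h * wenoP R c z cstar f i h with hq
  obtain ⟨hω0, hω1⟩ : 0 ≤ ω ∧ ω ≤ 1 := wenoOmegaG_mem_Icc hε hI
  have hqy : |q - y| ≤ ∑ i ∈ range (R / 2 + 1), |wenoP R c z cstar f i h - y| :=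
    abs_sum_mul_sub_le_sum_abs_sub (fun _ _ => wenoOmega_nonneg hε) (sum_wenoOmega hε) _ y
  calc |wenoQ R c z cstar f s ε h - y|
      = |ω * (wenoPfull R c z cstar f h - y) + (1 - ω) * (q - y)| := by
        rw [wenoQ, ← hω, ← hq]; congr 1; ring
    _ ≤ |ω * (wenoPfull R c z cstar f h - y)| + |(1 - ω) * (q - y)| := abs_add_le _ _
    _ = ω * |wenoPfull R c z cstar f h - y| + (1 - ω) * |q - y| := by
        rw [abs_mul, abs_mul, abs_of_nonneg hω0, abs_of_nonneg (sub_nonneg.2 hω1)]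
    _ ≤ _ := add_le_add (mul_le_of_le_one_left (abs_nonneg _) hω1)
        (mul_le_mul (one_sub_wenoOmegaG_le hε hI) hqy (abs_nonneg _)
          ((sub_nonneg.2 hω1).trans (one_sub_wenoOmegaG_le hε hI)))

theorem wenoPfull_sub_isBigO (hc : Set.InjOn c (Set.Iio R)) (hf : ContDiffAt ℝ R f z) :
    (fun h => wenoPfull R c z cstar f h - f (z + cstar * h)) =O[𝓝 0] fun h => h ^ R := by
  have hcard := card_range R
  have herr := lagrange_interpolation_sub_isBigO (s := range R) (by simpa using hc)
    (by rwa [hcard]) cstar (f := f) (z := z) (v := c)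
  simp only [eval_lagrange_basis, smul_eq_mul, hcard] at herr
  exact herr

theorem wenoP_sub_isBigO (hc : Set.InjOn c (Set.Icc i (i + (R - 1) / 2)))
    (hf : ContDiffAt ℝ ((R - 1) / 2 + 1 : ℕ) f z) :
    (fun h => wenoP R c z cstar f i h - f (z + cstar * h))
      =O[𝓝 0] fun h => h ^ ((R - 1) / 2 + 1) := by
  have hcard : #(Icc i (i + (R - 1) / 2)) = (R - 1) / 2 + 1 := by
    rw [Nat.card_Icc]; omega
  have herr := lagrange_interpolation_sub_isBigO (s := Icc i (i + (R - 1) / 2))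
    (by simpa using hc) (by rwa [hcard]) cstar (f := f) (z := z) (v := c)
  simp only [eval_lagrange_basis, smul_eq_mul, hcard] at herr
  exact herr

theorem sum_abs_wenoP_sub_isBigO (hR : 0 < R) (hc : Set.InjOn c (Set.Iio R))
    (hf : ContDiffAt ℝ ((R - 1) / 2 + 1 : ℕ) f z) :
    (fun h => ∑ i ∈ range (R / 2 + 1), |wenoP R c z cstar f i h - f (z + cstar * h)|)
      =O[𝓝 0] fun h => h ^ ((R - 1) / 2 + 1) := by
  refine IsBigO.fun_sum fun i hi => (wenoP_sub_isBigO (hc.mono fun j hj => ?_) hf).norm_left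
  rw [mem_range] at hi
  rw [Set.mem_Icc] at hj
  rw [Set.mem_Iio]
  omega

theorem wenoD_isBigO (hc : Set.InjOn c (Set.Iio R)) (hf : ContDiffAt ℝ (R - 1 : ℕ) f z) :
    wenoD R c z f =O[𝓝 0] fun h => h ^ (2 * (R - 1)) := by
  have hdiff := divided_difference_isBigO (s := range R) (by simpa using hc) (by simpa using hf)
  refine ((hdiff.const_mul_left ((R - 1)! : ℝ)).pow 2).congr (fun h => ?_) (fun h => ?_)
  · simp only [wenoD, smul_eq_mul, div_eq_inv_mul]
  · rw [card_range, ← pow_mul, mul_comm 2]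

theorem pow_isBigO_wenoI (hf : ContDiffAt ℝ (k + 1 : ℕ) f z)
    (hcrit : ∀ j, 1 ≤ j → j ≤ k → iteratedDeriv j f z = 0) (hk : iteratedDeriv (k + 1) f z ≠ 0)
    (hpow : ∃ j ∈ Ico i (i + (R - 1) / 2), c j ^ (k + 1) ≠ c (j + 1) ^ (k + 1)) :
    (fun h => h ^ (2 * (k + 1))) =O[𝓝 0] wenoI R c z f i := by
  obtain ⟨j, hj, hne⟩ := hpow
  have hgap : c (j + 1) - c j ≠ 0 := sub_ne_zero.2 fun heq => hne (by rw [heq])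
  have hincr := pow_isBigO_sub_of_iteratedDeriv_eq_zero hf
    (fun m hm hmk => hcrit m hm (Nat.lt_succ_iff.1 hmk)) hk hne
  have hslope : (fun h => h ^ (k + 1)) =O[𝓝 0] fun h =>
      (f (z + c (j + 1) * h) - f (z + c j * h)) / (c (j + 1) - c j) := by
    simpa only [div_eq_inv_mul] using hincr.trans (isBigO_self_const_mul (inv_ne_zero hgap) _ _)
  have hterm : (fun h => ((f (z + c (j + 1) * h) - f (z + c j * h)) / (c (j + 1) - c j)) ^ 2)
      =O[𝓝 0] wenoI R c z f i := isBigO_of_le _ fun h => by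
    rw [Real.norm_of_nonneg (sq_nonneg _), Real.norm_of_nonneg wenoI_nonneg]
    exact single_le_sum (f := fun j =>
      ((f (z + c (j + 1) * h) - f (z + c j * h)) / (c (j + 1) - c j)) ^ 2)
      (fun _ _ => sq_nonneg _) hj
  simpa only [← pow_mul, mul_comm 2] using (hslope.pow 2).trans hterm

theorem eventually_wenoI_pos (hI : (fun h => h ^ (2 * (k + 1))) =O[𝓝 0] wenoI R c z f i) :
    ∀ᶠ h in 𝓝[≠] 0, 0 < wenoI R c z f i h := by
  filter_upwards [(hI.mono nhdsWithin_le_nhds).eq_zero_imp, self_mem_nhdsWithin] with h hzero hh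
  exact wenoI_nonneg.lt_of_ne' fun hI0 => pow_ne_zero _ hh (hzero hI0)

theorem wenoD_div_wenoI_isBigO (hkR : k + 2 ≤ R)
    (hD : wenoD R c z f =O[𝓝 0] fun h => h ^ (2 * (R - 1)))
    (hI : (fun h => h ^ (2 * (k + 1))) =O[𝓝 0] wenoI R c z f i) :
    (fun h => wenoD R c z f h / wenoI R c z f i h) =O[𝓝[≠] 0] fun h => h ^ (2 * (R - 2 - k)) := by
  have hinv := (hI.mono (nhdsWithin_le_nhds (s := {0}ᶜ))).inv_rev <| by
    filter_upwards [self_mem_nhdsWithin] with h hh h0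
    exact absurd h0 (pow_ne_zero _ hh)
  refine ((hD.mono nhdsWithin_le_nhds).mul hinv).congr' (.of_forall fun h => rfl) ?_
  filter_upwards [self_mem_nhdsWithin] with h hh
  rw [← pow_sub₀ h hh (by omega)]
  congr 1
  omega

theorem sum_wenoD_div_wenoI_pow_isBigO (hkR : k + 2 ≤ R)
    (hD : wenoD R c z f =O[𝓝 0] fun h => h ^ (2 * (R - 1)))
    (hI : ∀ i ∈ range (R / 2 + 1), (fun h => h ^ (2 * (k + 1))) =O[𝓝 0] wenoI R c z f i) (s : ℕ) :
    (fun h => ∑ i ∈ range (R / 2 + 1), (wenoD R c z f h / wenoI R c z f i h) ^ s)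
      =O[𝓝[≠] 0] fun h => h ^ (2 * s * (R - 2 - k)) := by
  refine IsBigO.fun_sum fun i hi =>
    ((wenoD_div_wenoI_isBigO hkR hD (hI i hi)).pow s).congr_right fun h => ?_
  rw [← pow_mul, mul_right_comm]

theorem exists_mem_substencil_pow_ne (hR : 3 ≤ R) (hc : Set.InjOn c (Set.Iio R))
    (hexc : 5 ≤ R ∨ Even k ∨ ∀ j, j ≤ R - 2 → c j + c (j + 1) ≠ 0) (hi : i < R / 2 + 1) :
    ∃ j ∈ Ico i (i + (R - 1) / 2), c j ^ (k + 1) ≠ c (j + 1) ^ (k + 1) := by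
  by_contra! hpow
  have hsymm : ∀ j ∈ Ico i (i + (R - 1) / 2), c j = -c (j + 1) ∧ Even (k + 1) := fun j hj => by
    have hjR : j + 1 < R := by rw [mem_Ico] at hj; omega
    have hne : c j ≠ c (j + 1) := fun heq =>
      absurd (hc (Nat.lt_of_succ_lt hjR) hjR heq) (by omega)
    simpa [hne] using pow_eq_pow_iff_cases.1 (hpow j hj)
  have hi0 : i ∈ Ico i (i + (R - 1) / 2) := by rw [mem_Ico]; omega
  obtain ⟨hi1, hkodd⟩ := hsymm i hi0
  rcases hexc with hR5 | hkeven | hnosymm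
  · have hi2 := (hsymm (i + 1) (by rw [mem_Ico]; omega)).1
    have hrepeat : c i = c (i + 1 + 1) := by rw [hi1, hi2, neg_neg]
    exact absurd (hc (Set.mem_Iio.2 (by omega)) (Set.mem_Iio.2 (by omega)) hrepeat) (by omega)
  · exact Nat.even_add_one.1 hkodd hkeven
  · exact hnosymm i (by omega) (by rw [hi1, neg_add_cancel])

theorem wenoQ_error_bound_isBigO (hkR : k + 2 ≤ R) (hc : Set.InjOn c (Set.Iio R))
    (hf : ContDiffAt ℝ R f z) (hs : (R - 1) / 2 + 1 ≤ 2 * s * (R - 2 - k))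
    (hI : ∀ i ∈ range (R / 2 + 1), (fun h => h ^ (2 * (k + 1))) =O[𝓝 0] wenoI R c z f i) :
    (fun h => |wenoPfull R c z cstar f h - f (z + cstar * h)| +
        (∑ i ∈ range (R / 2 + 1), (wenoD R c z f h / wenoI R c z f i h) ^ s) *
          ∑ i ∈ range (R / 2 + 1), |wenoP R c z cstar f i h - f (z + cstar * h)|)
      =O[𝓝[≠] 0] fun h => h ^ R := by
  have hpunct : 𝓝[≠] (0 : ℝ) ≤ 𝓝 0 := nhdsWithin_le_nhds
  have hfull := ((wenoPfull_sub_isBigO (cstar := cstar) hc hf).mono hpunct).norm_left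
  have hsub := (sum_abs_wenoP_sub_isBigO (cstar := cstar) (by omega) hc
    (hf.of_le (by exact_mod_cast (by omega : (R - 1) / 2 + 1 ≤ R)))).mono hpunct
  have hD := wenoD_isBigO hc (hf.of_le (by exact_mod_cast R.sub_le 1))
  have hdamping := (sum_wenoD_div_wenoI_pow_isBigO hkR hD hI s).trans
    ((isBigO_pow_pow_nhds_zero_of_le hs).mono hpunct)
  refine hfull.add ((hdamping.mul hsub).trans ?_)
  simp only [← pow_add]
  exact (isBigO_pow_pow_nhds_zero_of_le (by omega)).mono hpunct

end Weno

-- For `ε = 0` no division by zero is involved: `Iᵢ > 0` for all small `h ≠ 0`.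
theorem stmt_12_general (R : ℕ) (c : ℕ → ℝ) (hc : Set.InjOn c (Set.Iio R)) (z cstar : ℝ)
    (f : ℝ → ℝ) (hf : ContDiffAt ℝ R f z) (k : ℕ)
    (hcrit : ∀ j, 1 ≤ j → j ≤ k → iteratedDeriv j f z = 0) (hk1 : iteratedDeriv (k + 1) f z ≠ 0)
    (hexc : 5 ≤ R ∨ Even k ∨ ∀ j, j ≤ R - 2 → c j + c (j + 1) ≠ 0)
    (s : ℕ) (hs : (R - 1) / 2 + 1 ≤ 2 * s * (R - 2 - k)) :
    ∃ C > 0, ∃ h₀ > 0, ∀ ε ≥ 0, ∀ h ≠ 0, |h| < h₀ →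
      |wenoQ R c z cstar f s ε h - f (z + cstar * h)| ≤ C * |h| ^ R := by
  have hkR : k + 2 < R := by
    have hpos : 0 < R - 2 - k := Nat.pos_of_mul_pos_left ((Nat.succ_pos _).trans_le hs)
    omega
  have hI : ∀ i ∈ range (R / 2 + 1), (fun h => h ^ (2 * (k + 1))) =O[𝓝 0] wenoI R c z f i :=
    fun i hi => pow_isBigO_wenoI (hf.of_le (by exact_mod_cast (by omega : k + 1 ≤ R))) hcrit hk1
      (exists_mem_substencil_pow_ne (by omega) hc hexc (mem_range.1 hi))
  have hIpos : ∀ᶠ h in 𝓝[≠] (0 : ℝ), ∀ i ∈ range (R / 2 + 1), 0 < wenoI R c z f i h :=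
    (eventually_all_finset _).2 fun i hi => eventually_wenoI_pos (hI i hi)
  obtain ⟨C, hC, hbound⟩ :=
    (wenoQ_error_bound_isBigO (cstar := cstar) hkR.le hc hf hs hI).exists_pos
  obtain ⟨h₀, hh₀, H⟩ := Metric.eventually_nhds_iff.1
    (eventually_nhdsWithin_iff.1 (hbound.bound.and hIpos))
  refine ⟨C, hC, h₀, hh₀, fun ε hε h hh hlt => ?_⟩
  obtain ⟨hle, hpos⟩ := H (by simpa using hlt) hh
  calc |wenoQ R c z cstar f s ε h - f (z + cstar * h)| ≤ _ := abs_wenoQ_sub_le hε hpos _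
    _ ≤ _ := le_abs_self _
    _ ≤ C * ‖h ^ R‖ := hle
    _ = C * |h| ^ R := by rw [Real.norm_eq_abs, abs_pow]

/-- **Optimal order of the WENO reconstruction in the smooth case.** If `f` is `C^∞` near `z`
with a critical point of exact order `k ≤ R-3` at `z`, either `R ≥ 5`, or `k` even, or no
symmetric node pair, and `2s ≥ r+1`, then `q_{R,h}(x*_h) = f(x*_h) + O(h^R)`, uniformly in
`ε > 0`. -/
theorem stmt_12 (R : ℕ) (hR : 3 ≤ R) (c : ℕ → ℝ)
    (hc : ∀ i j : ℕ, i < j → j < R → c i < c j)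
    (z cstar : ℝ) (f : ℝ → ℝ) (U : Set ℝ) (hU : U ∈ nhds z)
    (hf : ContDiffOn ℝ (⊤ : ℕ∞) f U)
    (k : ℕ) (hk : k ≤ R - 3)
    (hcrit : ∀ j : ℕ, 1 ≤ j → j ≤ k → iteratedDeriv j f z = 0)
    (hk1 : iteratedDeriv (k + 1) f z ≠ 0)
    (hexc : 5 ≤ R ∨ Even k ∨ ∀ j : ℕ, j ≤ R - 2 → c j + c (j + 1) ≠ 0)
    (s : ℕ) (hs : (R - 1) / 2 + 1 ≤ 2 * s) :
    ∃ C > (0 : ℝ), ∃ h₀ > (0 : ℝ), ∀ ε > (0 : ℝ), ∀ h : ℝ, 0 < h → h < h₀ →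
      |wenoQ R c z cstar f s ε h - f (z + cstar * h)| ≤ C * h ^ R := by
  obtain ⟨C, hC, h₀, hh₀, H⟩ := stmt_12_general R c
    (StrictMonoOn.injOn fun i _ j hj hij => hc i j hij hj) z cstar f
    ((hf.contDiffAt hU).of_le (by exact_mod_cast le_top)) k hcrit hk1 hexc s
    (hs.trans (Nat.le_mul_of_pos_right _ (by omega)))
  refine ⟨C, hC, h₀, hh₀, fun ε hε h hh hlt => ?_⟩
  simpa only [abs_of_pos hh] using H ε hε.le h hh.ne' (by rwa [abs_of_pos hh])
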